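/- arXiv:2602.06482 — 4 statements merged into one kernel-verified Lean document; each statement's English description precedes it below -/
import Mathlib

section
/- Let s : ℝ × ℝ → ℝ, written s(θ, x), be twice continuously differentiable on ℝ × ℝ, let w : ℝ → ℝ be differentiable, and let x₁, …, xₙ ∈ ℝ. Define the empirical generalized score matching objective J(θ) = Σ_{i=1}^n [ w(xᵢ)·s(θ, xᵢ)² + 2·∂ₓ( w(x)·s(θ, x) )|_{x = xᵢ} ] and the Stein method-of-moments function λ(x, θ) = w(x)·s(θ, x)·∂_θ s(θ, x) + ∂ₓ( w(x)·∂_θ s(θ, x) ). Then for every θ ∈ ℝ, dJ/dθ (θ) = 2·Σ_{i=1}^n λ(xᵢ, θ). Consequently θ is a critical point of J if and only if Σ_{i=1}^n λ(xᵢ, θ) = 0, so the generalized score matching estimating equation coincides with the Stein method-of-moments equation obtained from g_θ(x) = w(x)·∂_θ s(θ, x). -/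
open Finset

section PartialDerivatives

variable {𝕜 E F : Type*} [NontriviallyNormedField 𝕜] [NormedAddCommGroup E] [NormedSpace 𝕜 E]
  [NormedAddCommGroup F] [NormedSpace 𝕜 F]

theorem hasDerivAt_comp_prodMk_left {f : 𝕜 × F → E} {f' : 𝕜 × F →L[𝕜] E} {a : 𝕜} {b : F}
    (hf : HasFDerivAt f f' (a, b)) : HasDerivAt (fun u => f (u, b)) (f' (1, 0)) a :=
  hf.comp_hasDerivAt a ((hasDerivAt_id a).prodMk (hasDerivAt_const a b))

theorem hasDerivAt_comp_prodMk_right {f : F × 𝕜 → E} {f' : F × 𝕜 →L[𝕜] E} {a : F} {b : 𝕜}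
    (hf : HasFDerivAt f f' (a, b)) : HasDerivAt (fun v => f (a, v)) (f' (0, 1)) b :=
  hf.comp_hasDerivAt b ((hasDerivAt_const b a).prodMk (hasDerivAt_id b))

theorem eventually_hasFDerivAt_of_contDiffAt_one {f : F → E} {p : F} (hf : ContDiffAt 𝕜 1 f p) :
    ∀ᶠ q in nhds p, HasFDerivAt f (fderiv 𝕜 f q) q :=
  (hf.eventually (by simp)).mono fun _ hq => (hq.differentiableAt one_ne_zero).hasFDerivAt

theorem hasFDerivAt_fderiv_of_contDiffAt_two {f : F → E} {p : F} (hf : ContDiffAt 𝕜 2 f p) :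
    HasFDerivAt (fderiv 𝕜 f) (fderiv 𝕜 (fderiv 𝕜 f) p) p :=
  ((hf.fderiv_right (m := 1) (by norm_num)).differentiableAt one_ne_zero).hasFDerivAt

theorem eventually_hasDerivAt_left {g : 𝕜 → F → E} {a : 𝕜} {b : F}
    (hg : ContDiffAt 𝕜 1 (Function.uncurry g) (a, b)) :
    ∀ᶠ y in nhds b,
      HasDerivAt (fun u => g u y) (fderiv 𝕜 (Function.uncurry g) (a, y) (1, 0)) a := by
  have slice : ContinuousAt (fun y : F => (a, y)) b := by fun_prop
  exact (slice.eventually (eventually_hasFDerivAt_of_contDiffAt_one hg)).mono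
    fun _ hy => hasDerivAt_comp_prodMk_left hy

theorem eventually_hasDerivAt_right {g : F → 𝕜 → E} {a : F} {b : 𝕜}
    (hg : ContDiffAt 𝕜 1 (Function.uncurry g) (a, b)) :
    ∀ᶠ u in nhds a, HasDerivAt (g u) (fderiv 𝕜 (Function.uncurry g) (u, b) (0, 1)) b := by
  have slice : ContinuousAt (fun u : F => (u, b)) a := by fun_prop
  exact (slice.eventually (eventually_hasFDerivAt_of_contDiffAt_one hg)).mono
    fun _ hu => hasDerivAt_comp_prodMk_right hu

theorem hasDerivAt_deriv_left {g : 𝕜 → 𝕜 → E} {a b : 𝕜}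
    (hg : ContDiffAt 𝕜 2 (Function.uncurry g) (a, b)) :
    HasDerivAt (fun y => deriv (fun u => g u y) a)
      (fderiv 𝕜 (fderiv 𝕜 (Function.uncurry g)) (a, b) (0, 1) (1, 0)) b := by
  have deriv_eq : ∀ᶠ y in nhds b,
      deriv (fun u => g u y) a = fderiv 𝕜 (Function.uncurry g) (a, y) (1, 0) :=
    (eventually_hasDerivAt_left (hg.of_le one_le_two)).mono fun _ hy => hy.deriv
  have second := hasDerivAt_comp_prodMk_right (hasFDerivAt_fderiv_of_contDiffAt_two hg)
  simpa using (second.clm_apply (hasDerivAt_const b (1, 0))).congr_of_eventuallyEq deriv_eq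

theorem hasDerivAt_deriv_right {g : 𝕜 → 𝕜 → E} {a b : 𝕜}
    (hg : ContDiffAt 𝕜 2 (Function.uncurry g) (a, b)) :
    HasDerivAt (fun u => deriv (g u) b)
      (fderiv 𝕜 (fderiv 𝕜 (Function.uncurry g)) (a, b) (1, 0) (0, 1)) a := by
  have deriv_eq : ∀ᶠ u in nhds a,
      deriv (g u) b = fderiv 𝕜 (Function.uncurry g) (u, b) (0, 1) :=
    (eventually_hasDerivAt_right (hg.of_le one_le_two)).mono fun _ hu => hu.deriv
  have second := hasDerivAt_comp_prodMk_left (hasFDerivAt_fderiv_of_contDiffAt_two hg)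
  simpa using (second.clm_apply (hasDerivAt_const a (0, 1))).congr_of_eventuallyEq deriv_eq

theorem deriv_deriv_comm {𝕜 E : Type*} [RCLike 𝕜] [NormedAddCommGroup E] [NormedSpace 𝕜 E]
    {g : 𝕜 → 𝕜 → E} {a b : 𝕜} (hg : ContDiffAt 𝕜 2 (Function.uncurry g) (a, b)) :
    deriv (fun u => deriv (g u) b) a = deriv (fun y => deriv (fun u => g u y) a) b := by
  rw [(hasDerivAt_deriv_right hg).deriv, (hasDerivAt_deriv_left hg).deriv]
  exact hg.isSymmSndFDerivAt (by simp) (1, 0) (0, 1)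

end PartialDerivatives

section SteinOperator

variable {𝕜 : Type*} [NontriviallyNormedField 𝕜]

/-- The Stein operator `g ↦ ψ g + g'` of the score function `ψ`. The Stein moment function `λ(·, θ)`
is its value at `ψ = s(θ, ·)` and `g = w · ∂_θ s(θ, ·)`. -/
noncomputable def steinOperator (ψ g : 𝕜 → 𝕜) (t : 𝕜) : 𝕜 :=
  ψ t * g t + deriv g t

/-- The contribution of one observation `t` to the empirical generalized score matching objective
with weight `w` and score function `ψ`. -/
noncomputable def scoreMatchingLoss (w ψ : 𝕜 → 𝕜) (t : 𝕜) : 𝕜 :=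
  w t * ψ t ^ 2 + 2 * deriv (fun y => w y * ψ y) t

theorem steinOperator_weight_mul (ψ w φ : 𝕜 → 𝕜) (t : 𝕜) :
    steinOperator ψ (fun y => w y * φ y) t =
      w t * ψ t * φ t + deriv (fun y => w y * φ y) t := by
  rw [steinOperator, mul_left_comm, mul_assoc]

end SteinOperator

section ScoreMatching

variable {𝕜 : Type*} [RCLike 𝕜] {s : 𝕜 → 𝕜 → 𝕜} {w : 𝕜 → 𝕜} {θ t : 𝕜}

-- As `w` is only differentiable, `w * s` need not be twice differentiable: the product rule in `x`
-- splits off `w` first, and the mixed partial derivatives are exchanged for `s` alone.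
theorem hasDerivAt_deriv_weight_mul (hs : ContDiffAt 𝕜 2 (Function.uncurry s) (θ, t))
    (hw : DifferentiableAt 𝕜 w t) :
    HasDerivAt (fun u => deriv (fun y => w y * s u y) t)
      (deriv (fun y => w y * deriv (fun u => s u y) θ) t) θ := by
  have hs_one := hs.of_le one_le_two
  have product_rule : ∀ᶠ u in nhds θ,
      deriv (fun y => w y * s u y) t = deriv w t * s u t + w t * deriv (s u) t :=
    (eventually_hasDerivAt_right hs_one).mono fun _ hu => deriv_fun_mul hw hu.differentiableAt
  have hs_param : DifferentiableAt 𝕜 (fun u => s u t) θ :=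
    (eventually_hasDerivAt_left hs_one).self_of_nhds.differentiableAt
  have hs_mixed : DifferentiableAt 𝕜 (fun u => deriv (s u) t) θ :=
    (hasDerivAt_deriv_right hs).differentiableAt
  rw [deriv_fun_mul hw (hasDerivAt_deriv_left hs).differentiableAt, ← deriv_deriv_comm hs]
  exact ((hs_param.hasDerivAt.const_mul (deriv w t)).add
    (hs_mixed.hasDerivAt.const_mul (w t))).congr_of_eventuallyEq product_rule

theorem hasDerivAt_scoreMatchingLoss (hs : ContDiffAt 𝕜 2 (Function.uncurry s) (θ, t))
    (hw : DifferentiableAt 𝕜 w t) :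
    HasDerivAt (fun u => scoreMatchingLoss w (s u) t)
      (2 * steinOperator (s θ) (fun y => w y * deriv (fun u => s u y) θ) t) θ := by
  have hs_param : DifferentiableAt 𝕜 (fun u => s u t) θ :=
    (eventually_hasDerivAt_left (hs.of_le one_le_two)).self_of_nhds.differentiableAt
  refine (((hs_param.hasDerivAt.pow 2).const_mul (w t)).add
    ((hasDerivAt_deriv_weight_mul hs hw).const_mul 2)).congr_deriv ?_
  rw [steinOperator_weight_mul]
  push_cast
  ring

theorem score_matching_is_stein_mom_general {ι : Type*} (I : Finset ι) (x : ι → 𝕜)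
    (hs : ∀ i ∈ I, ContDiffAt 𝕜 2 (Function.uncurry s) (θ, x i))
    (hw : ∀ i ∈ I, DifferentiableAt 𝕜 w (x i)) :
    let J := fun u => ∑ i ∈ I, scoreMatchingLoss w (s u) (x i)
    let Λ := ∑ i ∈ I, steinOperator (s θ) (fun y => w y * deriv (fun u => s u y) θ) (x i)
    HasDerivAt J (2 * Λ) θ ∧ (deriv J θ = 0 ↔ Λ = 0) := by
  intro J Λ
  have hJ : HasDerivAt J (2 * Λ) θ := by
    rw [mul_sum]
    exact HasDerivAt.fun_sum fun i hi => hasDerivAt_scoreMatchingLoss (hs i hi) (hw i hi)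
  exact ⟨hJ, by simp only [hJ.deriv, mul_eq_zero, two_ne_zero, false_or]⟩

end ScoreMatching

/-- Lemma 3.2: the derivative in `θ` of the empirical generalized score matching objective
`J(θ) = Σᵢ [w(xᵢ)s(θ,xᵢ)² + 2 ∂ₓ(w·s(θ,·))(xᵢ)]` equals `2 Σᵢ λ(xᵢ,θ)`, where
`λ(x,θ) = w(x)s(θ,x)∂_θ s(θ,x) + ∂ₓ(w·∂_θ s(·,x))(x)`; hence `θ` is a critical point of `J`
iff `Σᵢ λ(xᵢ,θ) = 0`. -/
theorem score_matching_is_stein_mom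
    (s : ℝ → ℝ → ℝ) (w : ℝ → ℝ) (n : ℕ) (x : Fin n → ℝ)
    (hs : ContDiff ℝ 2 (Function.uncurry s))
    (hw : Differentiable ℝ w)
    (J : ℝ → ℝ)
    (hJ : J = fun θ => ∑ i, (w (x i) * (s θ (x i)) ^ 2 +
        2 * deriv (fun y => w y * s θ y) (x i)))
    (lam : ℝ → ℝ → ℝ)
    (hlam : lam = fun t θ => w t * s θ t * deriv (fun u => s u t) θ +
        deriv (fun y => w y * deriv (fun u => s u y) θ) t) :
    ∀ θ : ℝ, deriv J θ = 2 * ∑ i, lam (x i) θ ∧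
      (deriv J θ = 0 ↔ (∑ i, lam (x i) θ) = 0) := by
  intro θ
  simpa only [hJ, hlam, scoreMatchingLoss, steinOperator_weight_mul] using
    (score_matching_is_stein_mom_general univ x (fun _ _ => hs.contDiffAt)
      (fun i _ => hw (x i))).imp_left HasDerivAt.deriv
end

section
/- Let f : ℝ → ℝ be a strictly positive differentiable probability density with score function s(x) = f'(x)/f(x), and let s_θ : ℝ → ℝ (a model score function) and w : ℝ → ℝ (a weight function) be differentiable. Assume that x ↦ f(x)·s_θ(x)·w(x) tends to 0 as x → ±∞ and its derivative is integrable on ℝ, and that f·s²·w, f·s_θ²·w, f·s·s_θ·w, and f·(s_θ·w)' are integrable on ℝ. Then ∫_ℝ f(x)·(s(x) - s_θ(x))²·w(x) dx = ∫_ℝ f(x)·s(x)²·w(x) dx + ∫_ℝ f(x)·s_θ(x)²·w(x) dx + 2·∫_ℝ f(x)·(s_θ(x)·w(x))' dx. In particular, the weighted Fisher divergence ∫ f·(s - s_θ)²·w differs from D_w(θ) = ∫ f·s_θ²·w + 2·∫ f·(s_θ·w)' by a quantity not depending on s_θ, so the two functionals have the same minimizers over any family of model scores. -/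
open MeasureTheory Filter Topology

/-! Only the cross term `∫ f s t w` of the expanded square involves the unknown score `s`. Since
`f s = f'`, integrating by parts against `t w` turns it into `-∫ f (t w)'`, the boundary terms
cancelling. -/

theorem hasDerivAt_mul_logDeriv {𝕜 𝕜' : Type*} [NontriviallyNormedField 𝕜]
    [NontriviallyNormedField 𝕜'] [NormedAlgebra 𝕜 𝕜'] {f : 𝕜 → 𝕜'} {x : 𝕜}
    (hf : DifferentiableAt 𝕜 f x) (hx : f x ≠ 0) :
    HasDerivAt f (f x * logDeriv f x) x := by
  rw [logDeriv_apply, mul_div_cancel₀ _ hx]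
  exact hf.hasDerivAt

theorem integral_mul_sub_sq_mul {α A : Type*} [MeasurableSpace α] {μ : Measure α}
    [NormedCommRing A] [NormedSpace ℝ A] {f s t w : α → A}
    (hss : Integrable (fun x => f x * s x ^ 2 * w x) μ)
    (htt : Integrable (fun x => f x * t x ^ 2 * w x) μ)
    (hst : Integrable (fun x => f x * (s x * t x) * w x) μ) :
    ∫ x, f x * (s x - t x) ^ 2 * w x ∂μ =
      (∫ x, f x * s x ^ 2 * w x ∂μ) + (∫ x, f x * t x ^ 2 * w x ∂μ) -
        2 * ∫ x, f x * (s x * t x) * w x ∂μ := by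
  have expand (x : α) : f x * (s x - t x) ^ 2 * w x =
      f x * s x ^ 2 * w x + f x * t x ^ 2 * w x -
        (f x * (s x * t x) * w x + f x * (s x * t x) * w x) := by ring
  simp_rw [expand]
  rw [integral_sub, integral_add hss htt, integral_add hst hst, two_mul]
  exacts [hss.add htt, hst.add hst]

/-- Stein's identity for the score `s` of `f`, expressed by `f' = f s` so that `f` may vanish. -/
theorem integral_mul_score_mul_eq_neg_integral_mul_deriv {A : Type*} [NormedRing A]
    [NormedAlgebra ℝ A] [CompleteSpace A] {f s g g' : ℝ → A} {c : A}
    (hf : ∀ x ∈ tsupport g, HasDerivAt f (f x * s x) x)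
    (hg : ∀ x ∈ tsupport f, HasDerivAt g (g' x) x)
    (hbot : Tendsto (fun x => f x * g x) atBot (𝓝 c))
    (htop : Tendsto (fun x => f x * g x) atTop (𝓝 c))
    (hfsg : Integrable (fun x => f x * s x * g x))
    (hfg' : Integrable (fun x => f x * g' x)) :
    ∫ x, f x * s x * g x = -∫ x, f x * g' x := by
  rw [integral_mul_deriv_eq_deriv_mul hf hg hfg' hfsg hbot htop, sub_self, zero_sub, neg_neg]

theorem weighted_score_matching_ibp_general {A : Type*} [NormedCommRing A] [NormedAlgebra ℝ A]
    [CompleteSpace A] {f s t w g' : ℝ → A} {c : A}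
    (hf : ∀ x ∈ tsupport (fun y => t y * w y), HasDerivAt f (f x * s x) x)
    (htw : ∀ x ∈ tsupport f, HasDerivAt (fun y => t y * w y) (g' x) x)
    (hbot : Tendsto (fun x => f x * t x * w x) atBot (𝓝 c))
    (htop : Tendsto (fun x => f x * t x * w x) atTop (𝓝 c))
    (hss : Integrable (fun x => f x * s x ^ 2 * w x))
    (htt : Integrable (fun x => f x * t x ^ 2 * w x))
    (hst : Integrable (fun x => f x * (s x * t x) * w x))
    (hfg' : Integrable (fun x => f x * g' x)) :
    ∫ x, f x * (s x - t x) ^ 2 * w x =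
      (∫ x, f x * s x ^ 2 * w x) + (∫ x, f x * t x ^ 2 * w x) + 2 * ∫ x, f x * g' x := by
  have cross_term : ∫ x, f x * (s x * t x) * w x = -∫ x, f x * g' x := by
    simp only [mul_assoc] at hbot htop
    have regroup (x : ℝ) : f x * (s x * t x) * w x = f x * s x * (t x * w x) := by ring
    simp only [regroup] at hst ⊢
    exact integral_mul_score_mul_eq_neg_integral_mul_deriv hf htw hbot htop hst hfg'
  rw [integral_mul_sub_sq_mul hss htt hst, cross_term, mul_neg, sub_neg_eq_add]

/-- Integration-by-parts identity converting the weighted Fisher divergence into the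
computable generalized score matching objective:
`∫ f(s - s_θ)² w = ∫ f s² w + ∫ f s_θ² w + 2 ∫ f (s_θ w)'`. -/
theorem weighted_score_matching_ibp
    (f sθ w : ℝ → ℝ)
    (hfpos : ∀ x, 0 < f x)
    (hf : Differentiable ℝ f)
    (hfdens : ∫ x, f x = 1)
    (hsθ : Differentiable ℝ sθ)
    (hw : Differentiable ℝ w)
    (s : ℝ → ℝ)
    (hs : s = fun x => deriv f x / f x)
    (hlim_bot : Tendsto (fun x => f x * sθ x * w x) atBot (𝓝 0))
    (hlim_top : Tendsto (fun x => f x * sθ x * w x) atTop (𝓝 0))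
    (hint_deriv : Integrable (deriv (fun x => f x * sθ x * w x)))
    (hint1 : Integrable (fun x => f x * (s x) ^ 2 * w x))
    (hint2 : Integrable (fun x => f x * (sθ x) ^ 2 * w x))
    (hint3 : Integrable (fun x => f x * (s x * sθ x) * w x))
    (hint4 : Integrable (fun x => f x * deriv (fun y => sθ y * w y) x)) :
    ∫ x, f x * (s x - sθ x) ^ 2 * w x =
      (∫ x, f x * (s x) ^ 2 * w x) + (∫ x, f x * (sθ x) ^ 2 * w x) +
        2 * ∫ x, f x * deriv (fun y => sθ y * w y) x := by
  subst hs
  exact weighted_score_matching_ibp_general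
    (fun x _ => hasDerivAt_mul_logDeriv (hf x) (hfpos x).ne')
    (fun x _ => (hsθ.fun_mul hw x).hasDerivAt) hlim_bot hlim_top hint1 hint2 hint3 hint4
end

section
/- Let g : ℝ → ℝ be a bijection with inverse h, where h is differentiable with everywhere positive derivative h', and h' is differentiable. Let f, f_θ : ℝ → ℝ be strictly positive differentiable probability densities, and define the transformed densities f_Y(y) = f(h(y))·h'(y) and f_{Y,θ}(y) = f_θ(h(y))·h'(y). Write s = (log f)', s_θ = (log f_θ)', s_Y = (log f_Y)', s_{Y,θ} = (log f_{Y,θ})' for the score functions. Then: (i) for every y, s_Y(y) - s_{Y,θ}(y) = ( s(h(y)) - s_θ(h(y)) )·h'(y); and (ii) ∫_ℝ f_Y(y)·( s_Y(y) - s_{Y,θ}(y) )² dy = ∫_ℝ f(x)·( s(x) - s_θ(x) )²·w(x) dx with weight w(x) = h'(g(x))², where both sides are Lebesgue integrals of nonnegative functions (possibly infinite). That is, the unweighted Fisher divergence between the transformed densities equals the weighted Fisher divergence between the original densities. -/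
open MeasureTheory

/-! The log-density of `Y` is `log f ∘ h + log h'`. Only the first term depends on the density, so
the second one cancels from a difference of scores, and the chain rule leaves a factor `h'`. It
enters the divergence squared, which is the weight, while the single factor `h'` in the density of
`Y` is the Jacobian of the substitution `x = h y`. -/

open scoped ENNReal

/-- The score of a density `f` on the line: the derivative of `log f` in the space variable. -/
noncomputable def score (f : ℝ → ℝ) : ℝ → ℝ :=
  deriv fun x => Real.log (f x)

/-- The density of `Y` when `X = h Y` has density `f` and `h` is increasing. It is expressed through
`h`, the inverse of the transformation `X ↦ Y`, and has no absolute value around `h'`. -/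
noncomputable def transformedDensity (h f : ℝ → ℝ) : ℝ → ℝ :=
  fun y => f (h y) * deriv h y

/-- The Fisher divergence of `q` from `p` over `S` with weight `w`, possibly infinite. The weight is
meant to be nonnegative: `ENNReal.ofReal` truncates negative values of the integrand to `0`. -/
noncomputable def weightedFisherDivergence (S : Set ℝ) (w p q : ℝ → ℝ) : ℝ≥0∞ :=
  ∫⁻ x in S, ENNReal.ofReal (p x * (score p x - score q x) ^ 2 * w x)

section Score

variable {f q h : ℝ → ℝ} {y : ℝ}

lemma score_eq_logDeriv (hf : DifferentiableAt ℝ f y) (hf₀ : f y ≠ 0) :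
    score f y = logDeriv f y :=
  Real.deriv_log_comp_eq_logDeriv hf hf₀

lemma score_transformedDensity (hh : DifferentiableAt ℝ h y) (hh₀ : deriv h y ≠ 0)
    (hh' : DifferentiableAt ℝ (deriv h) y) (hf : DifferentiableAt ℝ f (h y)) (hf₀ : f (h y) ≠ 0) :
    score (transformedDensity h f) y = score f (h y) * deriv h y + score (deriv h) y := by
  have hfh : DifferentiableAt ℝ (f ∘ h) y := hf.comp y hh
  calc score (transformedDensity h f) y
      = logDeriv (fun z => (f ∘ h) z * deriv h z) y :=
        score_eq_logDeriv (hfh.mul hh') (mul_ne_zero hf₀ hh₀)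
    _ = logDeriv (f ∘ h) y + logDeriv (deriv h) y := logDeriv_mul y hf₀ hh₀ hfh hh'
    _ = score f (h y) * deriv h y + score (deriv h) y := by
        rw [logDeriv_comp hf hh, score_eq_logDeriv hf hf₀, score_eq_logDeriv hh' hh₀]

lemma score_transformedDensity_sub (hh : DifferentiableAt ℝ h y) (hh₀ : deriv h y ≠ 0)
    (hh' : DifferentiableAt ℝ (deriv h) y)
    (hf : DifferentiableAt ℝ f (h y)) (hf₀ : f (h y) ≠ 0)
    (hq : DifferentiableAt ℝ q (h y)) (hq₀ : q (h y) ≠ 0) :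
    score (transformedDensity h f) y - score (transformedDensity h q) y =
      (score f (h y) - score q (h y)) * deriv h y := by
  rw [score_transformedDensity hh hh₀ hh' hf hf₀, score_transformedDensity hh hh₀ hh' hq hq₀]
  ring

end Score

lemma setLIntegral_image_ofReal_eq_of_deriv_nonneg {h : ℝ → ℝ} {S : Set ℝ} (hS : MeasurableSet S)
    (hinj : Set.InjOn h S) (hh : ∀ y ∈ S, DifferentiableAt ℝ h y) (hh' : ∀ y ∈ S, 0 ≤ deriv h y)
    (φ : ℝ → ℝ) :
    ∫⁻ x in h '' S, ENNReal.ofReal (φ x) = ∫⁻ y in S, ENNReal.ofReal (φ (h y) * deriv h y) := by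
  rw [lintegral_image_eq_lintegral_abs_deriv_mul hS
    (fun y hy => (hh y hy).hasDerivAt.hasDerivWithinAt) hinj]
  refine setLIntegral_congr_fun hS fun y hy => ?_
  rw [abs_of_nonneg (hh' y hy), ← ENNReal.ofReal_mul (hh' y hy), mul_comm]

theorem score_matching_change_of_variables_general {g h f fθ : ℝ → ℝ} {S : Set ℝ}
    (hS : MeasurableSet S) (hgh : Set.LeftInvOn g h S)
    (hh : ∀ y ∈ S, DifferentiableAt ℝ h y) (hh'pos : ∀ y ∈ S, 0 < deriv h y)
    (hh'diff : ∀ y ∈ S, DifferentiableAt ℝ (deriv h) y)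
    (hfpos : ∀ x ∈ h '' S, 0 < f x) (hfθpos : ∀ x ∈ h '' S, 0 < fθ x)
    (hf : ∀ x ∈ h '' S, DifferentiableAt ℝ f x) (hfθ : ∀ x ∈ h '' S, DifferentiableAt ℝ fθ x) :
    (∀ y ∈ S, score (transformedDensity h f) y - score (transformedDensity h fθ) y =
      (score f (h y) - score fθ (h y)) * deriv h y) ∧
    weightedFisherDivergence S 1 (transformedDensity h f) (transformedDensity h fθ) =
      weightedFisherDivergence (h '' S) (fun x => deriv h (g x) ^ 2) f fθ := by
  have score_sub : ∀ y ∈ S,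
      score (transformedDensity h f) y - score (transformedDensity h fθ) y =
        (score f (h y) - score fθ (h y)) * deriv h y := fun y hy =>
    have hhy := Set.mem_image_of_mem h hy
    score_transformedDensity_sub (hh y hy) (hh'pos y hy).ne' (hh'diff y hy)
      (hf _ hhy) (hfpos _ hhy).ne' (hfθ _ hhy) (hfθpos _ hhy).ne'
  refine ⟨score_sub, ?_⟩
  unfold weightedFisherDivergence
  rw [setLIntegral_image_ofReal_eq_of_deriv_nonneg hS hgh.injOn hh fun y hy => (hh'pos y hy).le]
  refine setLIntegral_congr_fun hS fun y hy => congrArg ENNReal.ofReal ?_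
  simp only [score_sub y hy, hgh hy, transformedDensity, Pi.one_apply]
  ring

/-- Generalized score matching arises from ordinary score matching by a change of
variables: with `Y = g(X)`, `h = g⁻¹` increasing, the scores of the transformed densities
satisfy `s_Y - s_{Y,θ} = (s∘h - s_θ∘h)·h'`, and the unweighted Fisher divergence between
the transformed densities equals the weighted Fisher divergence between the originals with
weight `w(x) = h'(g(x))²`. -/
theorem score_matching_change_of_variables
    (g h : ℝ → ℝ)
    (hgh : Function.LeftInverse h g) (hhg : Function.RightInverse h g)
    (hh : Differentiable ℝ h)
    (hh'pos : ∀ y, 0 < deriv h y)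
    (hh'diff : Differentiable ℝ (deriv h))
    (f fθ : ℝ → ℝ)
    (hfpos : ∀ x, 0 < f x) (hfθpos : ∀ x, 0 < fθ x)
    (hf : Differentiable ℝ f) (hfθ : Differentiable ℝ fθ)
    (hfdens : ∫ x, f x = 1) (hfθdens : ∫ x, fθ x = 1)
    (fY fYθ : ℝ → ℝ)
    (hfY : fY = fun y => f (h y) * deriv h y)
    (hfYθ : fYθ = fun y => fθ (h y) * deriv h y)
    (s sθ sY sYθ : ℝ → ℝ)
    (hs : s = deriv (fun x => Real.log (f x)))
    (hsθ : sθ = deriv (fun x => Real.log (fθ x)))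
    (hsY : sY = deriv (fun y => Real.log (fY y)))
    (hsYθ : sYθ = deriv (fun y => Real.log (fYθ y))) :
    (∀ y : ℝ, sY y - sYθ y = (s (h y) - sθ (h y)) * deriv h y) ∧
    (∫⁻ y : ℝ, ENNReal.ofReal (fY y * (sY y - sYθ y) ^ 2)) =
      (∫⁻ x : ℝ, ENNReal.ofReal (f x * (s x - sθ x) ^ 2 * (deriv h (g x)) ^ 2)) := by
  subst hfY hfYθ hs hsθ hsY hsYθ
  simpa [weightedFisherDivergence, score, transformedDensity, hgh.surjective.range_eq] using
    score_matching_change_of_variables_general MeasurableSet.univ (hhg.leftInvOn _)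
      (fun y _ => hh y) (fun y _ => hh'pos y) (fun y _ => hh'diff y) (fun x _ => hfpos x)
      (fun x _ => hfθpos x) (fun x _ => hf x) (fun x _ => hfθ x)
end

section
/- Consider the two-parameter Gamma score s_θ(x) = θ₁/x - θ₂ (for the Gamma(α, β) model with θ₁ = α - 1, θ₂ = β), a differentiable weight w : ℝ → ℝ, and data x₁, …, xₙ > 0. Define the moment functions λ₁(θ, x) = (w(x)/x)·(θ₁/x - θ₂) + d/dx( w(x)/x ) and λ₂(θ, x) = -w(x)·(θ₁/x - θ₂) - w'(x), and the averages Ā₁ = n⁻¹ Σᵢ [ w'(xᵢ)/xᵢ - w(xᵢ)/xᵢ² ], Ā₂ = -n⁻¹ Σᵢ w'(xᵢ), B̄₁₁ = -n⁻¹ Σᵢ w(xᵢ)/xᵢ², B̄₁₂ = B̄₂₁ = n⁻¹ Σᵢ w(xᵢ)/xᵢ, B̄₂₂ = -n⁻¹ Σᵢ w(xᵢ). If B̄₁₁·B̄₂₂ - B̄₁₂·B̄₂₁ ≠ 0, then θ̂ = (θ̂₁, θ̂₂) with θ̂₁ = (B̄₂₂·Ā₁ - B̄₁₂·Ā₂)/(B̄₁₁·B̄₂₂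 - B̄₁₂·B̄₂₁) and θ̂₂ = (B̄₁₁·Ā₂ - B̄₂₁·Ā₁)/(B̄₁₁·B̄₂₂ - B̄₁₂·B̄₂₁) is the unique θ ∈ ℝ² satisfying Σᵢ λ₁(θ, xᵢ) = 0 and Σᵢ λ₂(θ, xᵢ) = 0. -/
open Finset

/-!
The score of an exponential family is affine in the natural parameter `θ`, hence so are the Stein
moment functions, and their empirical averages are `Ā - B̄ θ` with `Ā` and `B̄` free of `θ`. The
moment equations are thus the linear system `B̄ θ = Ā`. For the Gamma model the quotient rule gives
the entries of `Ā`, and Cramer's rule gives `B̄⁻¹ Ā`.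
-/

open Matrix
open scoped BigOperators

theorem expect_eq_zero_iff_sum_eq_zero {ι M : Type*} [AddCommMonoid M] [Module ℚ≥0 M] (s : Finset ι)
    (f : ι → M) : 𝔼 i ∈ s, f i = 0 ↔ ∑ i ∈ s, f i = 0 := by
  constructor <;> intro h
  · rw [← card_smul_expect, h, smul_zero]
  · rw [expect, h, smul_zero]

theorem mulVec_eq_iff_eq_inv_mulVec {ι R : Type*} [Fintype ι] [DecidableEq ι] [CommRing R]
    {A : Matrix ι ι R} (hA : IsUnit A.det) (u v : ι → R) : A *ᵥ u = v ↔ u = A⁻¹ *ᵥ v := by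
  constructor
  · rintro rfl
    rw [mulVec_mulVec, nonsing_inv_mul A hA, one_mulVec]
  · rintro rfl
    rw [mulVec_mulVec, mul_nonsing_inv A hA, one_mulVec]

theorem inv_fin_two_mulVec {K : Type*} [Field K] (a b c d p q : K) :
    !![a, b; c, d]⁻¹ *ᵥ ![p, q] =
      ![(d * p - b * q) / (a * d - b * c), (a * q - c * p) / (a * d - b * c)] := by
  rw [Matrix.inv_def, adjugate_fin_two_of, det_fin_two_of, Ring.inverse_eq_inv', smul_mulVec]
  ext j
  fin_cases j <;> simp [div_eq_inv_mul, mul_add, sub_eq_add_neg, add_comm, mul_comm]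

theorem deriv_div_id {𝕜 : Type*} [NontriviallyNormedField 𝕜] {f : 𝕜 → 𝕜} {t : 𝕜}
    (hf : DifferentiableAt 𝕜 f t) (ht : t ≠ 0) :
    deriv (fun y => f y / y) t = deriv f t / t - f t / t ^ 2 := by
  rw [deriv_fun_div hf differentiableAt_fun_id ht, deriv_id'']
  field_simp

section SteinMoment

variable {ι κ : Type*} [Fintype ι] [Fintype κ]

/-- The score `s_θ(t) = ∑ₖ θₖ vₖ(t) + c(t)`, the derivative in `t` of the log-density, of a
univariate exponential family with natural parameter `θ`: the `vₖ` are the derivatives of the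
sufficient statistics, and `c` is the logarithmic derivative of the base density. -/
def expFamilyScore (v : ι → ℝ → ℝ) (c : ℝ → ℝ) (θ : ι → ℝ) (t : ℝ) : ℝ :=
  ∑ k, v k t * θ k + c t

/-- The Stein method-of-moments function `λⱼ(θ, t) = w(t) vⱼ(t) s_θ(t) + (w vⱼ)'(t)`
with weight `w`. -/
noncomputable def steinMoment (w : ℝ → ℝ) (v : ι → ℝ → ℝ) (c : ℝ → ℝ) (θ : ι → ℝ) (j : ι) (t : ℝ) :
    ℝ :=
  w t * v j t * expFamilyScore v c θ t + deriv (fun y => w y * v j y) t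

/-- The matrix `B̄` of minus the linear part in `θ` of the averaged moment functions; the sign makes
the moment equations read `B̄ θ = Ā`. -/
noncomputable def steinMatrix (w : ℝ → ℝ) (v : ι → ℝ → ℝ) (x : κ → ℝ) : Matrix ι ι ℝ :=
  of fun j k => -𝔼 i, w (x i) * v j (x i) * v k (x i)

/-- The vector `Ā` of the constant terms in `θ` of the averaged moment functions. -/
noncomputable def steinVector (w : ℝ → ℝ) (v : ι → ℝ → ℝ) (c : ℝ → ℝ) (x : κ → ℝ) (j : ι) : ℝ :=
  𝔼 i, (w (x i) * v j (x i) * c (x i) + deriv (fun y => w y * v j y) (x i))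

variable (w : ℝ → ℝ) (v : ι → ℝ → ℝ) (c : ℝ → ℝ) (x : κ → ℝ) (θ : ι → ℝ)

theorem expect_steinMoment (j : ι) :
    𝔼 i, steinMoment w v c θ j (x i) = steinVector w v c x j - (steinMatrix w v x *ᵥ θ) j := by
  have linear_part :
      (steinMatrix w v x *ᵥ θ) j = -𝔼 i, ∑ k, w (x i) * v j (x i) * v k (x i) * θ k := by
    simp only [mulVec, dotProduct, steinMatrix, of_apply, neg_mul, sum_neg_distrib, expect_mul,
      expect_sum_comm]
  rw [linear_part, steinVector, sub_neg_eq_add, ← expect_add_distrib]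
  refine expect_congr rfl fun i _ => ?_
  simp only [steinMoment, expFamilyScore, mul_add, mul_sum, mul_assoc]
  ring

theorem sum_steinMoment_eq_zero_iff :
    (∀ j, ∑ i, steinMoment w v c θ j (x i) = 0) ↔
      steinMatrix w v x *ᵥ θ = steinVector w v c x := by
  simp only [← expect_eq_zero_iff_sum_eq_zero, expect_steinMoment, sub_eq_zero]
  rw [← funext_iff, eq_comm]

theorem sum_steinMoment_eq_zero_iff_eq_inv_mulVec [DecidableEq ι]
    (hdet : (steinMatrix w v x).det ≠ 0) :
    (∀ j, ∑ i, steinMoment w v c θ j (x i) = 0) ↔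
      θ = (steinMatrix w v x)⁻¹ *ᵥ steinVector w v c x := by
  rw [sum_steinMoment_eq_zero_iff, mulVec_eq_iff_eq_inv_mulVec hdet.isUnit]

end SteinMoment

section Gamma

/-- The derivatives `(1/t, -1)` of the sufficient statistics `(log t, -t)` of the Gamma model, whose
natural parameter is `(α - 1, β)`. -/
noncomputable def gammaStatDeriv : Fin 2 → ℝ → ℝ :=
  ![fun t => t⁻¹, fun _ => -1]

variable {κ : Type*} [Fintype κ] (w : ℝ → ℝ) (x : κ → ℝ)

theorem expFamilyScore_gammaStatDeriv (θ : ℝ × ℝ) (t : ℝ) :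
    expFamilyScore gammaStatDeriv 0 ![θ.1, θ.2] t = θ.1 / t - θ.2 := by
  simp [expFamilyScore, gammaStatDeriv, Fin.sum_univ_two, div_eq_inv_mul, sub_eq_add_neg]

theorem steinMoment_gammaStatDeriv_zero (θ : ℝ × ℝ) (t : ℝ) :
    steinMoment w gammaStatDeriv 0 ![θ.1, θ.2] 0 t =
      w t / t * (θ.1 / t - θ.2) + deriv (fun y => w y / y) t := by
  rw [steinMoment, expFamilyScore_gammaStatDeriv]
  simp [gammaStatDeriv, div_eq_mul_inv]

theorem steinMoment_gammaStatDeriv_one (θ : ℝ × ℝ) (t : ℝ) :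
    steinMoment w gammaStatDeriv 0 ![θ.1, θ.2] 1 t = -w t * (θ.1 / t - θ.2) - deriv w t := by
  rw [steinMoment, expFamilyScore_gammaStatDeriv]
  simp [gammaStatDeriv, sub_eq_add_neg]

theorem steinMatrix_gammaStatDeriv :
    steinMatrix w gammaStatDeriv x =
      !![-𝔼 i, w (x i) / x i ^ 2, 𝔼 i, w (x i) / x i; 𝔼 i, w (x i) / x i, -𝔼 i, w (x i)] := by
  ext j k
  fin_cases j <;> fin_cases k <;>
    simp [steinMatrix, gammaStatDeriv, expect_neg_distrib, div_eq_mul_inv, sq, mul_assoc]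

theorem steinVector_gammaStatDeriv (hw : ∀ i, DifferentiableAt ℝ w (x i)) (hx : ∀ i, x i ≠ 0) :
    steinVector w gammaStatDeriv 0 x =
      ![𝔼 i, (deriv w (x i) / x i - w (x i) / x i ^ 2), -𝔼 i, deriv w (x i)] := by
  ext j
  fin_cases j
  · simp [steinVector, gammaStatDeriv, ← div_eq_mul_inv, deriv_div_id (hw _) (hx _)]
  · simp [steinVector, gammaStatDeriv, expect_neg_distrib]

end Gamma

theorem two_param_gamma_estimator_general
    (w : ℝ → ℝ) (n : ℕ) (x : Fin n → ℝ)
    (hw : ∀ i, DifferentiableAt ℝ w (x i)) (hx : ∀ i, x i ≠ 0)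
    (lam1 lam2 : ℝ × ℝ → ℝ → ℝ)
    (hlam1 : lam1 = fun θ t => (w t / t) * (θ.1 / t - θ.2) + deriv (fun y => w y / y) t)
    (hlam2 : lam2 = fun θ t => -(w t) * (θ.1 / t - θ.2) - deriv w t)
    (A1 A2 B11 B12 B21 B22 : ℝ)
    (hA1 : A1 = (n : ℝ)⁻¹ * ∑ i, (deriv w (x i) / x i - w (x i) / (x i) ^ 2))
    (hA2 : A2 = -((n : ℝ)⁻¹ * ∑ i, deriv w (x i)))
    (hB11 : B11 = -((n : ℝ)⁻¹ * ∑ i, w (x i) / (x i) ^ 2))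
    (hB12 : B12 = (n : ℝ)⁻¹ * ∑ i, w (x i) / x i)
    (hB21 : B21 = B12)
    (hB22 : B22 = -((n : ℝ)⁻¹ * ∑ i, w (x i)))
    (hdet : B11 * B22 - B12 * B21 ≠ 0) (θ : ℝ × ℝ) :
    ((∑ i, lam1 θ (x i)) = 0 ∧ (∑ i, lam2 θ (x i)) = 0) ↔
      θ = ((B22 * A1 - B12 * A2) / (B11 * B22 - B12 * B21),
           (B11 * A2 - B21 * A1) / (B11 * B22 - B12 * B21)) := by
  have mean (f : Fin n → ℝ) : (n : ℝ)⁻¹ * ∑ i, f i = 𝔼 i, f i := by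
    rw [Fintype.expect_eq_sum_div_card, Fintype.card_fin, div_eq_inv_mul]
  simp only [mean] at hA1 hA2 hB11 hB12 hB22
  have matrix_eq : steinMatrix w gammaStatDeriv x = !![B11, B12; B21, B22] := by
    rw [steinMatrix_gammaStatDeriv, hB21, hB11, hB12, hB22]
  have vector_eq : steinVector w gammaStatDeriv 0 x = ![A1, A2] := by
    rw [steinVector_gammaStatDeriv w x hw hx, hA1, hA2]
  have solve := sum_steinMoment_eq_zero_iff_eq_inv_mulVec w gammaStatDeriv 0 x ![θ.1, θ.2]
    (by rwa [matrix_eq, det_fin_two_of])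
  rw [matrix_eq, vector_eq, inv_fin_two_mulVec] at solve
  simpa [hlam1, hlam2, Fin.forall_fin_two, steinMoment_gammaStatDeriv_zero,
    steinMoment_gammaStatDeriv_one, Prod.ext_iff] using solve

/-- The explicit two-parameter Gamma estimator `(α̂-1, β̂) = B̄⁻¹Ā` of Section 5.2:
with the moment functions `λ₁, λ₂` built from the score `s_θ(x) = θ₁/x - θ₂` and weight
`w`, if the determinant `B̄₁₁B̄₂₂ - B̄₁₂B̄₂₁` is nonzero, then the displayed `θ̂` is the
unique solution of `Σᵢ λ₁(θ,xᵢ) = 0` and `Σᵢ λ₂(θ,xᵢ) = 0`. -/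
theorem two_param_gamma_estimator
    (w : ℝ → ℝ) (hw : Differentiable ℝ w)
    (n : ℕ) (hn : 1 ≤ n) (x : Fin n → ℝ) (hx : ∀ i, 0 < x i)
    (lam1 lam2 : ℝ × ℝ → ℝ → ℝ)
    (hlam1 : lam1 = fun θ t => (w t / t) * (θ.1 / t - θ.2) + deriv (fun y => w y / y) t)
    (hlam2 : lam2 = fun θ t => -(w t) * (θ.1 / t - θ.2) - deriv w t)
    (A1 A2 B11 B12 B21 B22 : ℝ)
    (hA1 : A1 = (n : ℝ)⁻¹ * ∑ i, (deriv w (x i) / x i - w (x i) / (x i) ^ 2))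
    (hA2 : A2 = -((n : ℝ)⁻¹ * ∑ i, deriv w (x i)))
    (hB11 : B11 = -((n : ℝ)⁻¹ * ∑ i, w (x i) / (x i) ^ 2))
    (hB12 : B12 = (n : ℝ)⁻¹ * ∑ i, w (x i) / x i)
    (hB21 : B21 = B12)
    (hB22 : B22 = -((n : ℝ)⁻¹ * ∑ i, w (x i)))
    (hdet : B11 * B22 - B12 * B21 ≠ 0)
    (θhat : ℝ × ℝ)
    (hθhat : θhat = ((B22 * A1 - B12 * A2) / (B11 * B22 - B12 * B21),
                     (B11 * A2 - B21 * A1) / (B11 * B22 - B12 * B21))) :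
    ((∑ i, lam1 θhat (x i)) = 0 ∧ (∑ i, lam2 θhat (x i)) = 0) ∧
      ∀ θ : ℝ × ℝ, (∑ i, lam1 θ (x i)) = 0 → (∑ i, lam2 θ (x i)) = 0 → θ = θhat := by
  have solve := two_param_gamma_estimator_general w n x (fun i => hw (x i)) (fun i => (hx i).ne')
    lam1 lam2 hlam1 hlam2 A1 A2 B11 B12 B21 B22 hA1 hA2 hB11 hB12 hB21 hB22 hdet
  exact ⟨(solve θhat).mpr hθhat, fun θ h1 h2 => ((solve θ).mp ⟨h1, h2⟩).trans hθhat.symm⟩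
end
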